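/- Let M be a Hausdorff topological space, z : M → ℂ and h : M → ℝ² continuous maps, (r_i)_{i≥1} a strictly increasing sequence of positive reals with r_i → ∞, and (K_i)_{i≥1} a sequence of compact subsets of M with K_i contained in the interior of K_{i+1} and ⋃_{i≥1} K_i = M. Assume that K_i ⊆ z⁻¹({ζ : |ζ| ≤ r_i}) for every i ≥ 1, and that |h(p)| > r_{i−1} for every i ≥ 2 and every p ∈ K_i \ interior(K_{i−1}) with |z(p)| ≤ r_{i−1}. Then the map (z, h) : M → ℂ × ℝ² is proper: the preimage of every compact subset of ℂ × ℝ² is compact. -/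

import Mathlib

/-!
A compact `C` lies in a ball of radius `R ≤ r N` for some `N`. On each layer
`K (j + 1) \ K j` with `j ≥ N` either `‖z‖` or `‖h‖` exceeds `r j ≥ R`, so the preimage of `C`
misses all these layers, which together with `K N` exhaust `M`. The preimage is thus a closed
subset of the compact set `K N`.
-/

open Metric Set Function Filter

theorem properness_criterion
    {M : Type*} [TopologicalSpace M] [T2Space M]
    (z : M → ℂ) (hzc : Continuous z)
    (h : M → EuclideanSpace ℝ (Fin 2)) (hhc : Continuous h)
    (r : ℕ → ℝ) (hrpos : ∀ i, 0 < r i) (hrmono : StrictMono r)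
    (hrtop : Tendsto r atTop atTop)
    (K : ℕ → Set M) (hKcpt : ∀ i, IsCompact (K i))
    (hKint : ∀ i, K i ⊆ interior (K (i + 1)))
    (hKunion : (⋃ i, K i) = Set.univ)
    (hKz : ∀ i, K i ⊆ z ⁻¹' Metric.closedBall 0 (r i))
    (hbig : ∀ i, ∀ p ∈ K (i + 1) \ interior (K i), ‖z p‖ ≤ r i → ‖h p‖ > r i) :
    ∀ C : Set (ℂ × EuclideanSpace ℝ (Fin 2)), IsCompact C →
      IsCompact ((fun p => (z p, h p)) ⁻¹' C) := by
  -- The sup norm on the product bounds both `‖z p‖` and `‖h p‖` by one constant `R`.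
  intro C hC
  obtain ⟨R, hR⟩ := hC.isBounded.exists_norm_le
  obtain ⟨N, hN⟩ := (hrtop.eventually_ge_atTop R).exists
  have hmono : Monotone K := monotone_nat_of_le_succ fun i => (hKint i).trans interior_subset
  refine (hKcpt N).of_isClosed_subset (hC.isClosed.preimage (hzc.prodMk hhc)) ?_
  intro p hp
  have hzh : ‖z p‖ ≤ R ∧ ‖h p‖ ≤ R := norm_prod_le_iff.1 (hR _ hp)
  by_contra hpN
  have hex : ∃ i, p ∈ K i := Set.mem_iUnion.1 (hKunion ▸ Set.mem_univ p)
  -- By induction on `i`: a point outside `K N` that lies in some `K i` would lie in a layer `K (j + 1) \ K j` with `N ≤ j`,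
  -- where `R ≤ r j` and the hypothesis on layers forces `‖h p‖ > R`.
  have key : ∀ i, p ∉ K i := by
    intro i
    induction i with
    | zero => exact fun hi => hpN (hmono (Nat.zero_le N) hi)
    | succ j ih =>
      intro hj
      have hNj : N ≤ j := by
        by_contra hlt
        exact hpN (hmono (by omega) hj)
      have hRj : R ≤ r j := hN.trans (hrmono.monotone hNj)
      have := hbig j p ⟨hj, fun hi => ih (interior_subset hi)⟩ (hzh.1.trans hRj)
      linarith [hzh.2]
  obtain ⟨i, hi⟩ := hex
  exact key i hi
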